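/- arXiv:2311.18227 — 2 statements merged into one kernel-verified Lean document; each statement's English description precedes it below -/
import Mathlib

section
/- Let a_{n,1} = |S_{n,1}^{1≺n}(1324)| and b_{n,1} = |S_{n,1}^{2≺n}(1324)|. For all n ≥ 3, 2 · b_{n,1} = (n − 1) · a_{n−1,1}. (Equivalently, T_{2,1}(x) = (1/2) x² (d/dx) T_{1,1}(x), where T_{a,k}(x) = Σ_n |S_{n,k}^{a≺n}(1324)| xⁿ.) -/
/-- A permutation of `{1,…,n}` (encoded as `Equiv.Perm (Fin n)` with 0-based values)
avoids the pattern 1324 if there are no indices `i < j < k < l` with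
`σ i < σ k < σ j < σ l`. -/
def Avoids1324 {n : ℕ} (σ : Equiv.Perm (Fin n)) : Prop :=
  ¬ ∃ i j k l : Fin n, i < j ∧ j < k ∧ k < l ∧ σ i < σ k ∧ σ k < σ j ∧ σ j < σ l

/-- The set `S_{n,k}^{a ≺ n}(1324)`: 1324-avoiding permutations with the entry `a`
exactly `k` places to the left of the entry `n`, and the entries `1, …, a-1` all to
the right of `n`.  (Values are 0-based: the entry `a` is `⟨a-1, _⟩`.) -/
def SPerm (n a k : ℕ) : Set (Equiv.Perm (Fin n)) :=
  {σ | Avoids1324 σ ∧ ∃ hn : n - 1 < n, ∃ ha : a - 1 < n,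
    ((σ.symm ⟨n - 1, hn⟩ : Fin n) : ℕ) = ((σ.symm ⟨a - 1, ha⟩ : Fin n) : ℕ) + k ∧
    ∀ b : Fin n, (b : ℕ) + 1 < a → σ.symm ⟨n - 1, hn⟩ < σ.symm b}

open Equiv Finset

/-! The entry `1` of a permutation counted by `b_{n,k} = |S_{n,k}^{2≺n}|` lies to the right of `n`.
Deleting it leaves a permutation `τ` counted by `a_{n-1,k} = |S_{n-1,k}^{1≺n-1}|`. Conversely, `1`
may be put back anywhere to the right of the maximum of `τ`: a 1324-pattern starting at the new
entry would yield one starting at the minimum of `τ`, which lies further to the left. If the maximum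
of `τ` is at position `q` (from `0`), there are `n - 1 - q` such places, so `b_{n,k}` is the sum of
`n - 1 - q` over `τ`. Reverse-complementation turns this sum into that of `z + 1`, where
`z = q - k` is the position of the minimum of `τ`. The two summands add up to the constant
`n - k`. -/

theorem Avoids1324.of_strictMono {m n : ℕ} {σ : Perm (Fin n)} {τ : Perm (Fin m)}
    {f g : Fin m → Fin n} (hf : StrictMono f) (hg : StrictMono g) (hfg : ∀ i, σ (f i) = g (τ i))
    (hσ : Avoids1324 σ) : Avoids1324 τ := by
  rintro ⟨i, j, k, l, hij, hjk, hkl, hik, hkj, hjl⟩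
  refine hσ ⟨f i, f j, f k, f l, hf hij, hf hjk, hf hkl, ?_⟩
  simpa only [hfg, hg.lt_iff_lt] using And.intro hik ⟨hkj, hjl⟩

section ReverseComplement

variable {n : ℕ} {τ : Perm (Fin n)}

/-- The reverse-complement of a permutation, obtained from `τ(1)…τ(n)` by reading it backwards and
replacing each entry `v` by `n + 1 - v`. As an involution it is a bijection on permutations. -/
def reverseComplement : Perm (Fin n) ≃ Perm (Fin n) :=
  Fin.revPerm.permCongr

theorem reverseComplement_apply (i : Fin n) : reverseComplement τ i = (τ i.rev).rev :=
  rfl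

theorem symm_reverseComplement_apply (i : Fin n) :
    (reverseComplement τ).symm i = (τ.symm i.rev).rev :=
  rfl

theorem reverseComplement_reverseComplement : reverseComplement (reverseComplement τ) = τ := by
  ext i : 1
  simp only [reverseComplement_apply, Fin.rev_rev]

theorem Avoids1324.reverseComplement (hτ : Avoids1324 τ) : Avoids1324 (reverseComplement τ) := by
  rintro ⟨i, j, k, l, hij, hjk, hkl, hik, hkj, hjl⟩
  simp only [reverseComplement_apply, Fin.rev_lt_rev] at hik hkj hjl
  exact hτ ⟨l.rev, k.rev, j.rev, i.rev, Fin.rev_lt_rev.2 hkl, Fin.rev_lt_rev.2 hjk,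
    Fin.rev_lt_rev.2 hij, hjl, hkj, hik⟩

end ReverseComplement

section InsertZero

variable {n : ℕ} (τ : Perm (Fin n)) (p : Fin (n + 1))

/-- The permutation obtained from `τ` by raising all entries by one and inserting a new smallest
entry `0` at position `p`. The cycle `p.cycleRange` moves position `p` to the front and keeps the
order of the others. -/
def insertZero : Perm (Fin (n + 1)) :=
  p.cycleRange.trans (Perm.decomposeFin.symm (0, τ))

theorem insertZero_apply_self : insertZero τ p p = 0 := by
  simp [insertZero]

theorem insertZero_apply_succAbove (i : Fin n) : insertZero τ p (p.succAbove i) = (τ i).succ := by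
  simp [insertZero]

theorem symm_insertZero_zero : (insertZero τ p).symm 0 = p := by
  rw [symm_apply_eq, insertZero_apply_self]

theorem symm_insertZero_succ (v : Fin n) :
    (insertZero τ p).symm v.succ = p.succAbove (τ.symm v) := by
  rw [symm_apply_eq, insertZero_apply_succAbove, apply_symm_apply]

theorem insertZero_bijective :
    Function.Bijective fun x : (_ : Perm (Fin n)) × Fin (n + 1) ↦ insertZero x.1 x.2 := by
  refine (Fintype.bijective_iff_injective_and_card _).2 ⟨?_, ?_⟩
  · rintro ⟨τ, p⟩ ⟨τ', p'⟩ (h : insertZero τ p = insertZero τ' p')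
    obtain rfl : p = p' := by rw [← symm_insertZero_zero τ p, h, symm_insertZero_zero]
    obtain rfl : τ = τ' := Equiv.ext fun i ↦ Fin.succ_injective _ <| by
      rw [← insertZero_apply_succAbove τ p, h, insertZero_apply_succAbove]
    rfl
  · simp [Fintype.card_perm, Nat.factorial_succ, mul_comm]

end InsertZero

section AvoidanceOfInsertZero

variable {n : ℕ}

theorem exists_succAbove_eq_of_insertZero_lt {τ : Perm (Fin n)} {p i j : Fin (n + 1)}
    (h : insertZero τ p i < insertZero τ p j) : ∃ j', p.succAbove j' = j := by
  refine Fin.exists_succAbove_eq ?_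
  rintro rfl
  simp [insertZero_apply_self] at h

theorem Avoids1324.insertZero {τ : Perm (Fin (n + 1))} {p : Fin (n + 2)} (hτ : Avoids1324 τ)
    (hp : (τ.symm 0).castSucc < p) : Avoids1324 (insertZero τ p) := by
  rintro ⟨i, j, k, l, hij, hjk, hkl, hik, hkj, hjl⟩
  obtain ⟨j, rfl⟩ := exists_succAbove_eq_of_insertZero_lt hkj
  obtain ⟨k, rfl⟩ := exists_succAbove_eq_of_insertZero_lt hik
  obtain ⟨l, rfl⟩ := exists_succAbove_eq_of_insertZero_lt hjl
  rw [Fin.succAbove_lt_succAbove_iff] at hjk hkl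
  simp only [insertZero_apply_succAbove, Fin.succ_lt_succ_iff] at hik hkj hjl
  suffices ∃ i' < j, τ i' < τ k by
    obtain ⟨i', hij', hik'⟩ := this
    exact hτ ⟨i', j, k, l, hij', hjk, hkl, hik', hkj, hjl⟩
  rcases Fin.eq_self_or_eq_succAbove p i with rfl | ⟨i, rfl⟩
  · have hzj : τ.symm 0 < j :=
      Fin.castSucc_lt_castSucc_iff.1 (hp.trans_le (Fin.lt_succAbove_iff_le_castSucc _ _ |>.1 hij))
    refine ⟨τ.symm 0, hzj, ?_⟩
    rw [apply_symm_apply, Fin.pos_iff_ne_zero, Ne, ← eq_symm_apply]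
    exact (hzj.trans hjk).ne'
  · rw [Fin.succAbove_lt_succAbove_iff] at hij
    rw [insertZero_apply_succAbove, Fin.succ_lt_succ_iff] at hik
    exact ⟨i, hij, hik⟩

theorem avoids1324_insertZero_iff {τ : Perm (Fin (n + 1))} {p : Fin (n + 2)}
    (hp : (τ.symm 0).castSucc < p) : Avoids1324 (insertZero τ p) ↔ Avoids1324 τ :=
  ⟨.of_strictMono p.strictMono_succAbove Fin.strictMono_succ (insertZero_apply_succAbove τ p),
    fun hτ ↦ hτ.insertZero hp⟩

end AvoidanceOfInsertZero

section Counting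

variable {n k : ℕ}

theorem mem_sPerm_one_iff {τ : Perm (Fin (n + 1))} :
    τ ∈ SPerm (n + 1) 1 k ↔ Avoids1324 τ ∧ (τ.symm (Fin.last n) : ℕ) = τ.symm 0 + k :=
  and_congr_right fun _ ↦
    ⟨fun ⟨_, _, h, _⟩ ↦ h, fun h ↦ ⟨by omega, by omega, h, fun _ _ ↦ by omega⟩⟩

theorem mem_sPerm_two_iff {σ : Perm (Fin (n + 2))} :
    σ ∈ SPerm (n + 2) 2 k ↔
      Avoids1324 σ ∧ (σ.symm (Fin.last (n + 1)) : ℕ) = σ.symm 1 + k ∧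
        σ.symm (Fin.last (n + 1)) < σ.symm 0 := by
  refine and_congr_right fun _ ↦
    ⟨fun ⟨_, _, h, h'⟩ ↦ ⟨h, h' 0 (by simp)⟩, fun ⟨h, h'⟩ ↦ ⟨by omega, by omega, h, fun b hb ↦ ?_⟩⟩
  obtain rfl : b = 0 := Fin.ext (by simpa using hb)
  exact h'

theorem reverseComplement_mem_sPerm_one {τ : Perm (Fin (n + 1))} (hτ : τ ∈ SPerm (n + 1) 1 k) :
    reverseComplement τ ∈ SPerm (n + 1) 1 k := by
  rw [mem_sPerm_one_iff] at hτ ⊢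
  refine ⟨hτ.1.reverseComplement, ?_⟩
  simp only [symm_reverseComplement_apply, Fin.rev_last, Fin.rev_zero, Fin.val_rev]
  omega

theorem reverseComplement_mem_sPerm_one_iff {τ : Perm (Fin (n + 1))} :
    reverseComplement τ ∈ SPerm (n + 1) 1 k ↔ τ ∈ SPerm (n + 1) 1 k :=
  ⟨fun h ↦ reverseComplement_reverseComplement (τ := τ) ▸ reverseComplement_mem_sPerm_one h,
    reverseComplement_mem_sPerm_one⟩

theorem val_succAbove_eq_add_iff {p : Fin (n + 1)} {i j : Fin n} (hi : i.castSucc < p) :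
    (p.succAbove i : ℕ) = p.succAbove j + k ↔ (i : ℕ) = j + k := by
  rw [Fin.succAbove_of_castSucc_lt _ _ hi, Fin.val_castSucc]
  rcases lt_or_ge j.castSucc p with hj | hj
  · rw [Fin.succAbove_of_castSucc_lt _ _ hj, Fin.val_castSucc]
  · -- Here `i < p ≤ j`, so both equalities fail.
    rw [Fin.succAbove_of_le_castSucc _ _ hj, Fin.val_succ]
    have hij : i < j := Fin.castSucc_lt_castSucc_iff.1 (hi.trans_le hj)
    omega

theorem insertZero_mem_sPerm_two_iff {τ : Perm (Fin (n + 1))} {p : Fin (n + 2)} :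
    insertZero τ p ∈ SPerm (n + 2) 2 k ↔
      τ ∈ SPerm (n + 1) 1 k ∧ (τ.symm (Fin.last n)).castSucc < p := by
  rw [mem_sPerm_one_iff, mem_sPerm_two_iff, ← Fin.succ_last, ← Fin.succ_zero_eq_one,
    symm_insertZero_succ, symm_insertZero_succ, symm_insertZero_zero,
    Fin.succAbove_lt_iff_castSucc_lt, ← and_assoc]
  refine and_congr_left fun hp ↦ ?_
  rw [val_succAbove_eq_add_iff hp]
  refine and_congr_left fun hdist ↦ avoids1324_insertZero_iff (lt_of_le_of_lt ?_ hp)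
  exact Fin.castSucc_le_castSucc_iff.2 (Fin.le_def.2 (by omega))

open Classical in
theorem ncard_sPerm_two_eq_sum :
    (SPerm (n + 2) 2 k).ncard =
      ∑ τ ∈ (SPerm (n + 1) 1 k).toFinset, (n + 1 - (τ.symm (Fin.last n) : ℕ)) := by
  have hcard (τ : Perm (Fin (n + 1))) :
      #(Ioi (τ.symm (Fin.last n)).castSucc) = n + 1 - (τ.symm (Fin.last n) : ℕ) := by
    simp
  simp only [← hcard]
  rw [Set.ncard_eq_toFinset_card', ← card_sigma]
  refine (card_equiv (.ofBijective _ insertZero_bijective) fun x ↦ ?_).symm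
  simp [insertZero_mem_sPerm_two_iff]

open Classical in
theorem sum_sub_symm_last_eq_sum_symm_zero_add_one :
    ∑ τ ∈ (SPerm (n + 1) 1 k).toFinset, (n + 1 - (τ.symm (Fin.last n) : ℕ)) =
      ∑ τ ∈ (SPerm (n + 1) 1 k).toFinset, ((τ.symm 0 : ℕ) + 1) := by
  refine sum_equiv reverseComplement
    (fun τ ↦ by simp only [Set.mem_toFinset, reverseComplement_mem_sPerm_one_iff]) fun τ _ ↦ ?_
  simp only [symm_reverseComplement_apply, Fin.rev_zero, Fin.val_rev]
  omega

end Counting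

theorem stmt_9_general (n k : ℕ) (hn : 2 ≤ n) :
    2 * (SPerm n 2 k).ncard = (n - k) * (SPerm (n - 1) 1 k).ncard := by
  classical
  obtain ⟨m, rfl⟩ : ∃ m, n = m + 2 := ⟨n - 2, by omega⟩
  change _ = (m + 2 - k) * (SPerm (m + 1) 1 k).ncard
  let A := (SPerm (m + 1) 1 k).toFinset
  calc 2 * (SPerm (m + 2) 2 k).ncard
      = ∑ τ ∈ A, (m + 1 - (τ.symm (Fin.last m) : ℕ)) + ∑ τ ∈ A, ((τ.symm 0 : ℕ) + 1) := by
        rw [two_mul, ← sum_sub_symm_last_eq_sum_symm_zero_add_one, ncard_sPerm_two_eq_sum]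
    _ = ∑ τ ∈ A, (m + 2 - k) := by
        rw [← sum_add_distrib]
        refine sum_congr rfl fun τ hτ ↦ ?_
        have hdist := (mem_sPerm_one_iff.1 (Set.mem_toFinset.1 hτ)).2
        omega
    _ = (m + 2 - k) * (SPerm (m + 1) 1 k).ncard := by
        rw [sum_const, smul_eq_mul, mul_comm, Set.ncard_eq_toFinset_card']

/-- with `a_{n,1} = |S_{n,1}^{1≺n}(1324)|` and `b_{n,1} = |S_{n,1}^{2≺n}(1324)|`,
for `n ≥ 3`, `2 b_{n,1} = (n - 1) a_{n-1,1}`. -/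
theorem stmt_9 (n : ℕ) (hn : 3 ≤ n) :
    2 * (SPerm n 2 1).ncard = (n - 1) * (SPerm (n - 1) 1 1).ncard :=
  stmt_9_general n 1 (by omega)
end

section
/- Let a_{n,k} = |S_{n,k}^{1≺n}(1324)| (with a_{n,k} = 0 when no such permutations exist). For all n ≥ 2 and k ≥ 2, (k − 1) · a_{n−1,k} = Σ_{j=1}^{k−1} Σ_{m=1}^{n−1} a_{m,j} · a_{n−m,k−j}. (In generating function terms, with g₁(x,t) = Σ_{k≥1} Σ_n a_{n,k} t^k xⁿ, this says x·g₁ − t·x·(∂g₁/∂t) = −g₁².) -/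
/-!
Read a permutation of an interval of values `[lo, hi]` from left to right, let `hi` stand `k` places
to the right of `lo`, fix `0 < j < k`, and let `q` be the entry `j` places to the right of `lo`.
If the permutation avoids 1324, then among the entries to the left of `q` those above `q` precede
those below `q`, since otherwise such a pair together with `q` and `hi` forms a 1324; the same holds
to the right of `q`, by the pattern that starts with `lo` and `q`. Hence the permutation can be
recovered from its restrictions to `[lo, q]` and to `[q, hi]`. In the first `q` is still `j` places
to the right of `lo`, in the second `hi` is `k - j` places to the right of `q`. Conversely, any two
1324-avoiders with these gaps glue to a 1324-avoider. So for each of the `k - 1` values of `j` the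
inner sum `∑ m, a_{m,j} a_{n-m,k-j}` already equals `a_{n-1,k}`.
-/

section Arrangement

variable {α : Type*} {s t : Set α} {r r' : α → α → Prop} {a b : α}

/-- The elements of `s` placed in a row: `r x y` says that `x` and `y` belong to `s` and that `x`
stands to the left of `y`. As `r` is a relation on the whole type supported on `s`, arrangements
of different subsets of `α` can be compared and combined. -/
structure IsArrangement (s : Set α) (r : α → α → Prop) : Prop where
  mem_left {x y : α} : r x y → x ∈ s
  mem_right {x y : α} : r x y → y ∈ s
  irrefl (x : α) : ¬ r x x
  trans {x y z : α} : r x y → r y z → r x z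
  total {x y : α} : x ∈ s → y ∈ s → x ≠ y → r x y ∨ r y x

/-- The number of places from `a` rightwards to `b` in an arrangement, counted as the number of
entries to the right of `a` but not to the right of `b`; it is `0` if `b` stands to the left
of `a`. -/
noncomputable def gap (r : α → α → Prop) (a b : α) : ℕ :=
  {y | r a y ∧ ¬ r b y}.ncard

/-- The relation of standing to the left between the letters of the word `w`. -/
def Precedes {n : ℕ} (w : Fin n → α) : α → α → Prop :=
  Relation.Map (· < ·) w w

/-- The arrangement induced by `r` on the entries in `t`. -/
def restrictRel (t : Set α) (r : α → α → Prop) (x y : α) : Prop :=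
  x ∈ t ∧ y ∈ t ∧ r x y

namespace IsArrangement

theorem asymm (h : IsArrangement s r) (hab : r a b) : ¬ r b a :=
  fun hba => h.irrefl a (h.trans hab hba)

theorem ne (h : IsArrangement s r) (hab : r a b) : a ≠ b :=
  fun hab' => h.irrefl b (hab' ▸ hab)

theorem eq_of_le (h : IsArrangement s r) (h' : IsArrangement s r') (hle : r ≤ r') : r = r' := by
  refine le_antisymm hle fun x y hxy => ?_
  refine (h.total (h'.mem_left hxy) (h'.mem_right hxy) (h'.ne hxy)).resolve_right fun hyx => ?_
  exact h'.asymm hxy (hle y x hyx)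

theorem restrict (h : IsArrangement s r) (hts : t ⊆ s) : IsArrangement t (restrictRel t r) where
  mem_left hxy := hxy.1
  mem_right hxy := hxy.2.1
  irrefl x hx := h.irrefl x hx.2.2
  trans hxy hyz := ⟨hxy.1, hyz.2.1, h.trans hxy.2.2 hyz.2.2⟩
  total hx hy hne :=
    (h.total (hts hx) (hts hy) hne).imp (fun hxy => ⟨hx, hy, hxy⟩) (fun hyx => ⟨hy, hx, hyx⟩)

theorem finite_setOf (hs : s.Finite) : {r | IsArrangement s r}.Finite := by
  let graph (r : α → α → Prop) : Set (α × α) := {p | r p.1 p.2}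
  have graph_injective : graph.Injective := fun r r' h => by
    ext x y
    exact Set.ext_iff.1 h (x, y)
  refine ((hs.prod hs).finite_subsets.preimage graph_injective.injOn).subset ?_
  exact fun r h p hp => ⟨h.mem_left hp, h.mem_right hp⟩

theorem exists_word [Finite s] (h : IsArrangement s r) {n : ℕ} (hn : Nat.card s = n) :
    ∃ w : Fin n ≃ s, Precedes ((↑) ∘ w) = r := by
  classical
  have : Fintype s := Fintype.ofFinite s
  have : IsStrictTotalOrder s (fun x y => r x y) :=
    { trichotomous := fun x y hxy hyx => by
        by_contra hne
        exact (h.total x.2 y.2 (Subtype.coe_ne_coe.2 hne)).elim hxy hyx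
      irrefl := fun x => h.irrefl x
      trans := fun _ _ _ => h.trans }
  let _ : LinearOrder s := linearOrderOfSTO (fun x y : s => r x y)
  let w : Fin n ≃o s := Fintype.orderIsoFinOfCardEq s (Nat.card_eq_fintype_card.symm.trans hn)
  refine ⟨w.toEquiv, ?_⟩
  ext x y
  constructor
  · rintro ⟨i, j, hij, rfl, rfl⟩
    exact w.lt_iff_lt.2 hij
  · intro hxy
    refine ⟨w.symm ⟨x, h.mem_left hxy⟩, w.symm ⟨y, h.mem_right hxy⟩, ?_, by simp, by simp⟩
    exact w.symm.lt_iff_lt.2 hxy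

end IsArrangement

theorem gap_restrictRel (ha : a ∈ t) (hb : b ∈ t) (ht : ∀ y, r a y → ¬ r b y → y ∈ t) :
    gap (restrictRel t r) a b = gap r a b := by
  unfold gap restrictRel
  congr 1
  ext y
  simp only [Set.mem_ofPred_eq]
  grind

section Word

variable {n : ℕ} {w : Fin n → α}

theorem precedes_apply_apply (hw : w.Injective) (i j : Fin n) :
    Precedes w (w i) (w j) ↔ i < j :=
  Relation.map_apply_apply hw hw _ i j

theorem isArrangement_precedes (hw : w.Injective) :
    IsArrangement (Set.range w) (Precedes w) where
  mem_left := by rintro _ _ ⟨i, j, -, rfl, rfl⟩; exact ⟨i, rfl⟩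
  mem_right := by rintro _ _ ⟨i, j, -, rfl, rfl⟩; exact ⟨j, rfl⟩
  irrefl := by
    rintro _ ⟨i, j, hij, rfl, hji⟩
    exact hij.ne (hw hji.symm)
  trans := by
    rintro _ _ _ ⟨i, j, hij, rfl, rfl⟩ ⟨j', k, hjk, hj, rfl⟩
    exact ⟨i, k, hij.trans (hw hj ▸ hjk), rfl, rfl⟩
  total := by
    rintro _ _ ⟨i, rfl⟩ ⟨j, rfl⟩ hne
    simp only [precedes_apply_apply hw]
    exact lt_or_gt_of_ne fun hij => hne (congrArg w hij)

theorem gap_precedes (hw : w.Injective) (i j : Fin n) :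
    gap (Precedes w) (w i) (w j) = (j : ℕ) - i := by
  have between_eq : {y | Precedes w (w i) y ∧ ¬ Precedes w (w j) y} = w '' Finset.Ioc i j := by
    ext y
    constructor
    · rintro ⟨⟨i', k, hik, hi, rfl⟩, hjk⟩
      rw [precedes_apply_apply hw, not_lt] at hjk
      exact ⟨k, by simpa using ⟨hw hi ▸ hik, hjk⟩, rfl⟩
    · rintro ⟨k, hk, rfl⟩
      simpa [precedes_apply_apply hw] using hk
  rw [gap, between_eq, Set.ncard_image_of_injective _ hw, Set.ncard_coe_finset, Fin.card_Ioc]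

theorem precedes_comp_perm_injective (hw : w.Injective) :
    Function.Injective fun σ : Equiv.Perm (Fin n) => Precedes (w ∘ σ) := by
  intro σ τ hστ
  have lt_iff (i j : Fin n) : τ.symm (σ i) < τ.symm (σ j) ↔ i < j := by
    rw [← precedes_apply_apply (hw.comp τ.injective), ← precedes_apply_apply (hw.comp σ.injective)]
    simp only [Function.comp_apply, Equiv.apply_symm_apply]
    exact iff_of_eq (congrFun (congrFun hστ.symm _) _)
  let e : Fin n ≃o Fin n := (OrderIso.ofRelIsoLT ⟨σ.trans τ.symm, lt_iff _ _⟩)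
  have he : e = OrderIso.refl _ := Subsingleton.elim _ _
  ext1 i
  exact (τ.symm_apply_eq.1 (DFunLike.congr_fun he i))

theorem IsArrangement.exists_perm (h : IsArrangement (Set.range w) r) (hw : w.Injective) :
    ∃ σ : Equiv.Perm (Fin n), Precedes (w ∘ σ) = r := by
  have hcard : Nat.card (Set.range w) = n := by
    rw [Nat.card_range_of_injective hw, Nat.card_fin]
  obtain ⟨v, hv⟩ := h.exists_word hcard
  refine ⟨v.trans (Equiv.ofInjective w hw).symm, hv ▸ congrArg Precedes ?_⟩
  ext i
  exact Equiv.apply_ofInjective_symm hw (v i)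

end Word

namespace IsArrangement

variable [Finite s] {c q q' : α}

theorem gap_add_gap (h : IsArrangement s r) (hab : r a b) (hbc : r b c) :
    gap r a b + gap r b c = gap r a c := by
  obtain ⟨w, rfl⟩ := h.exists_word rfl
  have hw := Subtype.val_injective.comp w.injective
  obtain ⟨i, j, hij, rfl, rfl⟩ := hab
  obtain ⟨j', k, hjk, hj, rfl⟩ := hbc
  obtain rfl : j' = j := hw hj
  simp only [gap_precedes hw]
  omega

theorem eq_of_gap_eq (h : IsArrangement s r) (hq : r a q) (hq' : r a q')
    (hgap : gap r a q = gap r a q') : q = q' := by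
  obtain ⟨w, rfl⟩ := h.exists_word rfl
  have hw := Subtype.val_injective.comp w.injective
  obtain ⟨i, j, hij, rfl, rfl⟩ := hq
  obtain ⟨i', j', hij', hi, rfl⟩ := hq'
  obtain rfl : i' = i := hw hi
  simp only [gap_precedes hw] at hgap
  congr 1
  omega

theorem exists_gap_eq (h : IsArrangement s r) {j : ℕ} (hab : r a b) (hj : 0 < j)
    (hjb : j < gap r a b) : ∃ q, r a q ∧ r q b ∧ gap r a q = j := by
  obtain ⟨w, rfl⟩ := h.exists_word rfl
  have hw := Subtype.val_injective.comp w.injective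
  obtain ⟨i, k, hik, rfl, rfl⟩ := hab
  rw [gap_precedes hw] at hjb
  let m : Fin (Nat.card s) := ⟨i + j, by omega⟩
  have him : i < m := Fin.lt_def.2 (by simp only [m]; omega)
  have hmk : m < k := Fin.lt_def.2 (by simp only [m]; omega)
  refine ⟨_, (precedes_apply_apply hw i m).2 him, (precedes_apply_apply hw m k).2 hmk, ?_⟩
  rw [gap_precedes hw]
  simp [m]

end IsArrangement

end Arrangement

/-- Avoidance of the pattern 1324 for an arrangement `r`: no `a < b < c < d` stand in the order
`a, c, b, d` from left to right. -/
def RelAvoids1324 {α : Type*} [LT α] (r : α → α → Prop) : Prop :=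
  ∀ ⦃a b c d : α⦄, a < b → b < c → c < d → r a c → r c b → ¬ r b d

theorem RelAvoids1324.restrict {α : Type*} [LT α] {r : α → α → Prop} (h : RelAvoids1324 r)
    (t : Set α) : RelAvoids1324 (restrictRel t r) :=
  fun _ _ _ _ hab hbc hcd hac hcb hbd => h hab hbc hcd hac.2.2 hcb.2.2 hbd.2.2

/-- The arrangement with entries from `L`, which arranges elements `≤ q`, and `U`, which arranges
elements `≥ q`, obtained by placing from left to right: the entries of `U` before `q`, those of `L`
before `q`, then `q`, the entries of `U` after `q`, and those of `L` after `q`. -/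
def glue {α : Type*} (q : α) (L U : α → α → Prop) (x y : α) : Prop :=
  L x y ∨ U x y ∨ (L x q ∧ U q y) ∨ (U x q ∧ L q y) ∨ (U x q ∧ L y q) ∨ (U q x ∧ L q y)

section Glue

variable {α : Type*} [LinearOrder α] {lo q hi x y z : α} {r L U : α → α → Prop}

theorem glue_iff_of_le (hU : IsArrangement (Set.Icc q hi) U) (hx : x ≤ q) (hy : y ≤ q) :
    glue q L U x y ↔ L x y := by
  have U_irrefl := hU.irrefl q
  have U_left {x y : α} (hxy : U x y) := (hU.mem_left hxy).1
  have U_right {x y : α} (hxy : U x y) := (hU.mem_right hxy).1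
  grind [glue]

theorem glue_iff_of_ge (hL : IsArrangement (Set.Icc lo q) L) (hx : q ≤ x) (hy : q ≤ y) :
    glue q L U x y ↔ U x y := by
  have L_irrefl := hL.irrefl q
  have L_left {x y : α} (hxy : L x y) := (hL.mem_left hxy).2
  have L_right {x y : α} (hxy : L x y) := (hL.mem_right hxy).2
  grind [glue]

section Pair

variable (hL : IsArrangement (Set.Icc lo q) L) (hU : IsArrangement (Set.Icc q hi) U)

include hL hU

theorem glue_iff_of_le_of_lt (hx : x ∈ Set.Icc lo q) (hy : y ∈ Set.Ioc q hi) :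
    glue q L U x y ↔ ¬ L q x ∧ U q y := by
  have not_L {z : α} : ¬ L z y := fun h => (hL.mem_right h).2.not_gt hy.1
  constructor
  · rintro (h | h | ⟨hxq, hqy⟩ | ⟨-, h⟩ | ⟨-, h⟩ | ⟨-, h⟩)
    · exact absurd h not_L
    · obtain rfl := hx.2.antisymm (hU.mem_left h).1
      exact ⟨hL.irrefl x, h⟩
    · exact ⟨hL.asymm hxq, hqy⟩
    · exact absurd h not_L
    · exact absurd (hL.mem_left h).2 hy.1.not_ge
    · exact absurd h not_L
  · rintro ⟨hqx, hqy⟩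
    rcases hx.2.eq_or_lt with rfl | hxq
    · exact .inr (.inl hqy)
    · have hq_mem : q ∈ Set.Icc lo q := ⟨hx.1.trans hx.2, le_rfl⟩
      exact .inr (.inr (.inl ⟨(hL.total hx hq_mem hxq.ne).resolve_right hqx, hqy⟩))

theorem glue_iff_of_lt_of_le (hx : x ∈ Set.Ioc q hi) (hy : y ∈ Set.Icc lo q) :
    glue q L U x y ↔ U x q ∨ L q y := by
  have not_L {z : α} : ¬ L x z := fun h => (hL.mem_left h).2.not_gt hx.1
  constructor
  · rintro (h | h | ⟨h, -⟩ | ⟨h, -⟩ | ⟨h, -⟩ | ⟨-, h⟩)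
    · exact absurd h not_L
    · obtain rfl := hy.2.antisymm (hU.mem_right h).1
      exact .inl h
    · exact absurd h not_L
    · exact .inl h
    · exact .inl h
    · exact .inr h
  · intro h
    rcases hy.2.eq_or_lt with rfl | hyq
    · exact .inr (.inl (h.resolve_right (hL.irrefl y)))
    have hxq : U x q ∨ U q x :=
      hU.total ⟨hx.1.le, hx.2⟩ ⟨le_rfl, hx.1.le.trans hx.2⟩ hx.1.ne'
    have hyq : L y q ∨ L q y := hL.total hy ⟨hy.1.trans hy.2, le_rfl⟩ hyq.ne
    unfold glue
    tauto

theorem restrict_lower_glue : restrictRel (Set.Icc lo q) (glue q L U) = L := by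
  ext x y
  constructor
  · rintro ⟨hx, hy, hxy⟩
    exact (glue_iff_of_le hU hx.2 hy.2).1 hxy
  · exact fun hxy => ⟨hL.mem_left hxy, hL.mem_right hxy, .inl hxy⟩

theorem restrict_upper_glue : restrictRel (Set.Icc q hi) (glue q L U) = U := by
  ext x y
  constructor
  · rintro ⟨hx, hy, hxy⟩
    exact (glue_iff_of_ge hL hx.1 hy.1).1 hxy
  · exact fun hxy => ⟨hU.mem_left hxy, hU.mem_right hxy, .inr (.inl hxy)⟩

theorem glue_mem (hlo : lo ≤ q) (hhi : q ≤ hi) (hxy : glue q L U x y) :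
    x ∈ Set.Icc lo hi ∧ y ∈ Set.Icc lo hi := by
  have L_left {x y : α} (h : L x y) := Set.Icc_subset_Icc_right hhi (hL.mem_left h)
  have L_right {x y : α} (h : L x y) := Set.Icc_subset_Icc_right hhi (hL.mem_right h)
  have U_left {x y : α} (h : U x y) := Set.Icc_subset_Icc_left hlo (hU.mem_left h)
  have U_right {x y : α} (h : U x y) := Set.Icc_subset_Icc_left hlo (hU.mem_right h)
  rcases hxy with h | h | ⟨h, h'⟩ | ⟨h, h'⟩ | ⟨h, h'⟩ | ⟨h, h'⟩
  exacts [⟨L_left h, L_right h⟩, ⟨U_left h, U_right h⟩, ⟨L_left h, U_right h'⟩,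
    ⟨U_left h, L_right h'⟩, ⟨U_left h, L_left h'⟩, ⟨U_right h, L_right h'⟩]

theorem glue_trans (hlo : lo ≤ q) (hhi : q ≤ hi) (hxy : glue q L U x y) (hyz : glue q L U y z) :
    glue q L U x z := by
  obtain ⟨hx, hy⟩ := glue_mem hL hU hlo hhi hxy
  have hz := (glue_mem hL hU hlo hhi hyz).2
  have lower {x y : α} := glue_iff_of_le (x := x) (y := y) (L := L) hU
  have upper {x y : α} := glue_iff_of_ge (x := x) (y := y) (U := U) hL
  have up {x y : α} := glue_iff_of_le_of_lt (x := x) (y := y) hL hU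
  have down {x y : α} := glue_iff_of_lt_of_le (x := x) (y := y) hL hU
  rcases le_or_gt x q with hxq | hxq <;> rcases le_or_gt y q with hyq | hyq <;>
    rcases le_or_gt z q with hzq | hzq
  · rw [lower hxq hyq] at hxy
    rw [lower hyq hzq] at hyz
    exact (lower hxq hzq).2 (hL.trans hxy hyz)
  · rw [lower hxq hyq] at hxy
    obtain ⟨hqy, hqz⟩ := (up ⟨hy.1, hyq⟩ ⟨hzq, hz.2⟩).1 hyz
    exact (up ⟨hx.1, hxq⟩ ⟨hzq, hz.2⟩).2 ⟨fun hqx => hqy (hL.trans hqx hxy), hqz⟩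
  · obtain ⟨hqx, hqy⟩ := (up ⟨hx.1, hxq⟩ ⟨hyq, hy.2⟩).1 hxy
    have hqz : L q z := ((down ⟨hyq, hy.2⟩ ⟨hz.1, hzq⟩).1 hyz).resolve_left (hU.asymm hqy)
    rw [lower hxq hzq]
    rcases hxq.eq_or_lt with rfl | hxq
    · exact hqz
    · exact hL.trans ((hL.total ⟨hx.1, hxq.le⟩ ⟨hlo, le_rfl⟩ hxq.ne).resolve_right hqx) hqz
  · obtain ⟨hqx, hqy⟩ := (up ⟨hx.1, hxq⟩ ⟨hyq, hy.2⟩).1 hxy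
    rw [upper hyq.le hzq.le] at hyz
    exact (up ⟨hx.1, hxq⟩ ⟨hzq, hz.2⟩).2 ⟨hqx, hU.trans hqy hyz⟩
  · rw [lower hyq hzq] at hyz
    refine (down ⟨hxq, hx.2⟩ ⟨hz.1, hzq⟩).2 ?_
    exact ((down ⟨hxq, hx.2⟩ ⟨hy.1, hyq⟩).1 hxy).imp_right (hL.trans · hyz)
  · obtain ⟨hqy, hqz⟩ := (up ⟨hy.1, hyq⟩ ⟨hzq, hz.2⟩).1 hyz
    have hxq' : U x q := ((down ⟨hxq, hx.2⟩ ⟨hy.1, hyq⟩).1 hxy).resolve_right hqy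
    exact (upper hxq.le hzq.le).2 (hU.trans hxq' hqz)
  · rw [upper hxq.le hyq.le] at hxy
    refine (down ⟨hxq, hx.2⟩ ⟨hz.1, hzq⟩).2 ?_
    exact ((down ⟨hyq, hy.2⟩ ⟨hz.1, hzq⟩).1 hyz).imp_left (hU.trans hxy)
  · rw [upper hxq.le hyq.le] at hxy
    rw [upper hyq.le hzq.le] at hyz
    exact (upper hxq.le hzq.le).2 (hU.trans hxy hyz)

theorem glue_total_of_le_of_lt (hx : x ∈ Set.Icc lo q) (hy : y ∈ Set.Ioc q hi) :
    glue q L U x y ∨ glue q L U y x := by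
  have hyq : U y q ∨ U q y :=
    hU.total ⟨hy.1.le, hy.2⟩ ⟨le_rfl, hy.1.le.trans hy.2⟩ hy.1.ne'
  rw [glue_iff_of_le_of_lt hL hU hx hy, glue_iff_of_lt_of_le hL hU hy hx]
  tauto

theorem isArrangement_glue (hlo : lo ≤ q) (hhi : q ≤ hi) :
    IsArrangement (Set.Icc lo hi) (glue q L U) where
  mem_left hxy := (glue_mem hL hU hlo hhi hxy).1
  mem_right hxy := (glue_mem hL hU hlo hhi hxy).2
  irrefl x hx := by
    rcases le_total x q with hxq | hxq
    · exact hL.irrefl x ((glue_iff_of_le hU hxq hxq).1 hx)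
    · exact hU.irrefl x ((glue_iff_of_ge hL hxq hxq).1 hx)
  trans := glue_trans hL hU hlo hhi
  total {x y} hx hy hne := by
    rcases le_or_gt x q with hxq | hxq <;> rcases le_or_gt y q with hyq | hyq
    · exact (hL.total ⟨hx.1, hxq⟩ ⟨hy.1, hyq⟩ hne).imp .inl .inl
    · exact glue_total_of_le_of_lt hL hU ⟨hx.1, hxq⟩ ⟨hyq, hy.2⟩
    · exact (glue_total_of_le_of_lt hL hU ⟨hy.1, hyq⟩ ⟨hxq, hx.2⟩).symm
    · exact (hU.total ⟨hxq.le, hx.2⟩ ⟨hyq.le, hy.2⟩ hne).imp (.inr ∘ .inl) (.inr ∘ .inl)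

theorem relAvoids1324_glue (hlo : lo ≤ q) (hhi : q ≤ hi) (hL' : RelAvoids1324 L)
    (hU' : RelAvoids1324 U) : RelAvoids1324 (glue q L U) := by
  intro a b c d hab hbc hcd hac hcb hbd
  obtain ⟨ha, hc⟩ := glue_mem hL hU hlo hhi hac
  obtain ⟨hb, hd⟩ := glue_mem hL hU hlo hhi hbd
  have lower {x y : α} := glue_iff_of_le (x := x) (y := y) (L := L) hU
  have upper {x y : α} := glue_iff_of_ge (x := x) (y := y) (U := U) hL
  have up {x y : α} := glue_iff_of_le_of_lt (x := x) (y := y) hL hU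
  have down {x y : α} := glue_iff_of_lt_of_le (x := x) (y := y) hL hU
  rcases le_or_gt d q with hdq | hqd
  · have hcq := hcd.le.trans hdq
    have hbq := hbc.le.trans hcq
    exact hL' hab hbc hcd ((lower (hab.le.trans hbq) hcq).1 hac) ((lower hcq hbq).1 hcb)
      ((lower hbq hdq).1 hbd)
  rcases le_or_gt q a with hqa | haq
  · have hqb := hqa.trans hab.le
    have hqc := hqb.trans hbc.le
    exact hU' hab hbc hcd ((upper hqa hqc).1 hac) ((upper hqc hqb).1 hcb)
      ((upper hqb hqd.le).1 hbd)
  rcases le_or_gt c q with hcq | hqc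
  · have hbq := hbc.trans_le hcq
    have hqb : ¬ L q b := ((up ⟨hb.1, hbq.le⟩ ⟨hqd, hd.2⟩).1 hbd).1
    have hcb' : L c b := (lower hcq hbq.le).1 hcb
    rcases hcq.eq_or_lt with rfl | hcq
    · exact hqb hcb'
    · have hbq' : L b q := (hL.total ⟨hb.1, hbq.le⟩ ⟨hlo, le_rfl⟩ hbq.ne).resolve_right hqb
      exact hL' hab hbc hcq ((lower haq.le hcq.le).1 hac) hcb' hbq'
  have hqc' : U q c := ((up ⟨ha.1, haq.le⟩ ⟨hqc, hc.2⟩).1 hac).2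
  rcases le_or_gt b q with hbq | hqb
  · have hqb : ¬ L q b := ((up ⟨hb.1, hbq⟩ ⟨hqd, hd.2⟩).1 hbd).1
    exact ((down ⟨hqc, hc.2⟩ ⟨hb.1, hbq⟩).1 hcb).elim (hU.asymm hqc') hqb
  · exact hU' hqb hbc hcd hqc' ((upper hqc.le hqb.le).1 hcb) ((upper hqb.le hqd.le).1 hbd)

end Pair

section Cut

variable (h : IsArrangement (Set.Icc lo hi) r) (hr : RelAvoids1324 r) (hlo : r lo q) (hhi : r q hi)

include h hr

include hhi in
theorem IsArrangement.rel_of_le_of_le_of_rel_left (hy : y ≤ q) (hx : q ≤ x) (hyq : r y q)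
    (hxq : r x q) : r x y := by
  have hy : y < q := hy.lt_of_ne (h.ne hyq)
  have hx : q < x := hx.lt_of_ne' (h.ne hxq)
  have hxhi : x < hi := (h.mem_left hxq).2.lt_of_ne (h.ne (h.trans hxq hhi))
  refine (h.total (h.mem_left hxq) (h.mem_left hyq) (hy.trans hx).ne').resolve_right fun hyx => ?_
  exact hr hy hx hxhi hyx hxq hhi

include hlo in
theorem IsArrangement.rel_of_le_of_le_of_rel_right (hy : y ≤ q) (hx : q ≤ x) (hqy : r q y)
    (hqx : r q x) : r x y := by
  have hy : y < q := hy.lt_of_ne' (h.ne hqy)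
  have hx : q < x := hx.lt_of_ne (h.ne hqx)
  have hloy : lo < y := (h.mem_right hqy).1.lt_of_ne (h.ne (h.trans hlo hqy))
  refine (h.total (h.mem_right hqx) (h.mem_right hqy) (hy.trans hx).ne').resolve_right fun hyx => ?_
  exact hr hloy hy hx hlo hqy hyx

include hlo hhi

theorem IsArrangement.gap_restrict_lower :
    gap (restrictRel (Set.Icc lo q) r) lo q = gap r lo q := by
  have hq_mem := h.mem_right hlo
  refine gap_restrictRel ⟨le_rfl, hq_mem.1⟩ ⟨hq_mem.1, le_rfl⟩ fun y hloy hqy => ?_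
  refine ⟨(h.mem_right hloy).1, not_lt.1 fun hy => ?_⟩
  have hyq : r y q := (h.total hq_mem (h.mem_right hloy) hy.ne).resolve_left hqy
  exact h.asymm hloy (h.rel_of_le_of_le_of_rel_left hr hhi hq_mem.1 hy.le hlo hyq)

theorem IsArrangement.gap_restrict_upper :
    gap (restrictRel (Set.Icc q hi) r) q hi = gap r q hi := by
  have hq_mem := h.mem_left hhi
  refine gap_restrictRel ⟨le_rfl, hq_mem.2⟩ ⟨hq_mem.2, le_rfl⟩ fun y hqy hhiy => ?_
  refine ⟨not_lt.1 fun hy => ?_, (h.mem_right hqy).2⟩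
  exact hhiy (h.rel_of_le_of_le_of_rel_right hr hlo hy.le hq_mem.2 hqy hhi)

theorem IsArrangement.glue_restrictRel :
    glue q (restrictRel (Set.Icc lo q) r) (restrictRel (Set.Icc q hi) r) = r := by
  have hloq : lo ≤ q := (h.mem_left hhi).1
  have hqhi : q ≤ hi := (h.mem_left hhi).2
  have hL := h.restrict (Set.Icc_subset_Icc_right hqhi)
  have hU := h.restrict (Set.Icc_subset_Icc_left hloq)
  refine (isArrangement_glue hL hU hloq hqhi).eq_of_le h ?_
  rintro x y (hxy | hxy | ⟨hxq, hqy⟩ | ⟨hxq, hqy⟩ | ⟨hxq, hyq⟩ | ⟨hqx, hqy⟩)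
  · exact hxy.2.2
  · exact hxy.2.2
  · exact h.trans hxq.2.2 hqy.2.2
  · exact h.trans hxq.2.2 hqy.2.2
  · exact h.rel_of_le_of_le_of_rel_left hr hhi hyq.1.2 hxq.1.1 hyq.2.2 hxq.2.2
  · exact h.rel_of_le_of_le_of_rel_right hr hlo hqy.2.1.2 hqx.2.1.1 hqy.2.2 hqx.2.2

end Cut

end Glue

section Count

variable {α : Type*} [LinearOrder α] {lo q hi : α} {j k : ℕ}

/-- The 1324-avoiding arrangements of the interval `[lo, hi]` in which `hi` stands `k` places to
the right of `lo`. -/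
def gapArrangements (lo hi : α) (k : ℕ) : Set (α → α → Prop) :=
  {r | IsArrangement (Set.Icc lo hi) r ∧ RelAvoids1324 r ∧ r lo hi ∧ gap r lo hi = k}

/-- The 1324-avoiding arrangements of the interval `[lo, hi]` in which `q` stands `j` places to
the right of `lo` and `k` places to the left of `hi`. -/
def gapArrangementsThrough (lo q hi : α) (j k : ℕ) : Set (α → α → Prop) :=
  {r | IsArrangement (Set.Icc lo hi) r ∧ RelAvoids1324 r ∧
    (r lo q ∧ gap r lo q = j) ∧ r q hi ∧ gap r q hi = k}

theorem bijOn_glue (hlo : lo ≤ q) (hhi : q ≤ hi) :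
    Set.BijOn (fun p => glue q p.1 p.2) (gapArrangements lo q j ×ˢ gapArrangements q hi k)
      (gapArrangementsThrough lo q hi j k) := by
  refine Set.InvOn.bijOn
    (f' := fun r => (restrictRel (Set.Icc lo q) r, restrictRel (Set.Icc q hi) r)) ⟨?_, ?_⟩ ?_ ?_
  · rintro ⟨L, U⟩ ⟨⟨hL, -⟩, ⟨hU, -⟩⟩
    exact Prod.ext (restrict_lower_glue hL hU) (restrict_upper_glue hL hU)
  · rintro r ⟨h, hr, ⟨hloq, -⟩, hqhi, -⟩
    exact h.glue_restrictRel hr hloq hqhi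
  · rintro ⟨L, U⟩ ⟨⟨hL, hL', hloq, hj⟩, ⟨hU, hU', hqhi, hk⟩⟩
    have h := isArrangement_glue hL hU hlo hhi
    have hr := relAvoids1324_glue hL hU hlo hhi hL' hU'
    have hloq' : glue q L U lo q := .inl hloq
    have hqhi' : glue q L U q hi := .inr (.inl hqhi)
    have hgap_lower := h.gap_restrict_lower hr hloq' hqhi'
    have hgap_upper := h.gap_restrict_upper hr hloq' hqhi'
    rw [restrict_lower_glue hL hU] at hgap_lower
    rw [restrict_upper_glue hL hU] at hgap_upper
    exact ⟨h, hr, ⟨hloq', hgap_lower ▸ hj⟩, hqhi', hgap_upper ▸ hk⟩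
  · rintro r ⟨h, hr, ⟨hloq, hj⟩, hqhi, hk⟩
    refine ⟨⟨h.restrict (Set.Icc_subset_Icc_right hhi), hr.restrict _,
      ⟨⟨le_rfl, hlo⟩, ⟨hlo, le_rfl⟩, hloq⟩, ?_⟩,
      ⟨h.restrict (Set.Icc_subset_Icc_left hlo), hr.restrict _,
      ⟨⟨le_rfl, hhi⟩, ⟨hhi, le_rfl⟩, hqhi⟩, ?_⟩⟩
    · exact (h.gap_restrict_lower hr hloq hqhi).trans hj
    · exact (h.gap_restrict_upper hr hloq hqhi).trans hk

variable [LocallyFiniteOrder α]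

theorem finite_gapArrangementsThrough : (gapArrangementsThrough lo q hi j k).Finite :=
  (IsArrangement.finite_setOf (Set.finite_Icc lo hi)).subset fun _ hr => hr.1

theorem gapArrangements_add_eq_biUnion (hj : 0 < j) (hk : 0 < k) :
    gapArrangements lo hi (j + k) =
      ⋃ q ∈ Set.Icc lo hi, gapArrangementsThrough lo q hi j k := by
  ext r
  simp only [Set.mem_iUnion, exists_prop]
  constructor
  · rintro ⟨h, hr, hlohi, hgap⟩
    obtain ⟨q, hloq, hqhi, hgap_q⟩ := h.exists_gap_eq hlohi hj (by omega)
    have := h.gap_add_gap hloq hqhi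
    exact ⟨q, h.mem_right hloq, h, hr, ⟨hloq, hgap_q⟩, hqhi, by omega⟩
  · rintro ⟨q, -, h, hr, ⟨hloq, hgap_lower⟩, hqhi, hgap_upper⟩
    refine ⟨h, hr, h.trans hloq hqhi, ?_⟩
    rw [← h.gap_add_gap hloq hqhi, hgap_lower, hgap_upper]

theorem pairwise_disjoint_gapArrangementsThrough :
    Pairwise fun q q' : α =>
      Disjoint (gapArrangementsThrough lo q hi j k) (gapArrangementsThrough lo q' hi j k) := by
  refine fun q q' hne => Set.disjoint_left.2 ?_
  rintro r ⟨h, -, ⟨hq, hgap⟩, -⟩ ⟨-, -, ⟨hq', hgap'⟩, -⟩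
  exact hne (h.eq_of_gap_eq hq hq' (hgap.trans hgap'.symm))

theorem ncard_gapArrangements_add (hj : 0 < j) (hk : 0 < k) :
    (gapArrangements lo hi (j + k)).ncard =
      ∑ q ∈ Finset.Icc lo hi, (gapArrangements lo q j).ncard * (gapArrangements q hi k).ncard := by
  rw [gapArrangements_add_eq_biUnion hj hk,
    (Set.finite_Icc lo hi).ncard_biUnion (fun _ _ => finite_gapArrangementsThrough)
      (fun _ _ _ _ hne => pairwise_disjoint_gapArrangementsThrough hne),
    ← Finset.coe_Icc, finsum_mem_coe_finset]
  refine Finset.sum_congr rfl fun q hq => ?_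
  have hq := Finset.mem_Icc.1 hq
  rw [← (bijOn_glue hq.1 hq.2).ncard_eq, Set.ncard_prod]

end Count

section Permutation

variable {n k : ℕ}

theorem mem_SPerm_one_iff (hn : 0 < n) {σ : Equiv.Perm (Fin n)} :
    σ ∈ SPerm n 1 k ↔ Avoids1324 σ ∧
      (σ.symm ⟨n - 1, Nat.sub_one_lt_of_lt hn⟩ : ℕ) = σ.symm ⟨0, hn⟩ + k := by
  constructor
  · rintro ⟨hσ, _, _, hgap, -⟩
    exact ⟨hσ, hgap⟩
  · rintro ⟨hσ, hgap⟩
    exact ⟨hσ, Nat.sub_one_lt_of_lt hn, hn, hgap, fun b hb => by omega⟩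

variable {α : Type*} [LinearOrder α]

theorem relAvoids1324_precedes_iff {e : Fin n → α} (he : StrictMono e) (σ : Equiv.Perm (Fin n)) :
    RelAvoids1324 (Precedes (e ∘ σ)) ↔ Avoids1324 σ := by
  have hw := he.injective.comp σ.injective
  constructor
  · rintro h ⟨i, j, k, l, hij, hjk, hkl, hik, hkj, hjl⟩
    exact h (he hik) (he hkj) (he hjl) ((precedes_apply_apply hw i j).2 hij)
      ((precedes_apply_apply hw j k).2 hjk) ((precedes_apply_apply hw k l).2 hkl)
  · rintro h _ _ _ _ hab hbc hcd ⟨i, j, hij, rfl, rfl⟩ ⟨j', k, hjk, hj, rfl⟩ ⟨k', l, hkl, hk, rfl⟩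
    obtain rfl := hw hj
    obtain rfl := hw hk
    exact h ⟨i, _, _, l, hij, hjk, hkl, he.lt_iff_lt.1 hab, he.lt_iff_lt.1 hbc,
      he.lt_iff_lt.1 hcd⟩

theorem precedes_mem_gapArrangements_iff {lo hi : α} {e : Fin n → α} (he : StrictMono e)
    (hrange : Set.range e = Set.Icc lo hi) (hn : 0 < n) (hlo : e ⟨0, hn⟩ = lo)
    (hhi : e ⟨n - 1, Nat.sub_one_lt_of_lt hn⟩ = hi) (hk : 0 < k) {σ : Equiv.Perm (Fin n)} :
    Precedes (e ∘ σ) ∈ gapArrangements lo hi k ↔ σ ∈ SPerm n 1 k := by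
  have hw := he.injective.comp σ.injective
  have harr : IsArrangement (Set.Icc lo hi) (Precedes (e ∘ σ)) := by
    rw [← hrange, ← σ.surjective.range_comp e]
    exact isArrangement_precedes hw
  have hlo' : (e ∘ σ) (σ.symm ⟨0, hn⟩) = lo := by simpa using hlo
  have hhi' : (e ∘ σ) (σ.symm ⟨n - 1, Nat.sub_one_lt_of_lt hn⟩) = hi := by simpa using hhi
  rw [mem_SPerm_one_iff hn, ← relAvoids1324_precedes_iff he, gapArrangements, Set.mem_ofPred_eq,
    and_iff_right harr, ← hlo', ← hhi', precedes_apply_apply hw, gap_precedes hw, Fin.lt_def]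
  refine and_congr_right fun _ => ?_
  omega

theorem ncard_SPerm_card_Icc [LocallyFiniteOrder α] {lo hi : α} (hlohi : lo ≤ hi) (hk : 0 < k) :
    (SPerm (Finset.Icc lo hi).card 1 k).ncard = (gapArrangements lo hi k).ncard := by
  have hn : 0 < (Finset.Icc lo hi).card := (Finset.nonempty_Icc.2 hlohi).card_pos
  let e := (Finset.Icc lo hi).orderEmbOfFin rfl
  have hrange : Set.range e = Set.Icc lo hi := by
    rw [Finset.range_orderEmbOfFin, Finset.coe_Icc]
  have hlo : e ⟨0, hn⟩ = lo := (Finset.orderEmbOfFin_zero rfl hn).trans <|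
    (Finset.min'_eq_iff _ _ _).2
      ⟨Finset.left_mem_Icc.2 hlohi, fun _ hb => (Finset.mem_Icc.1 hb).1⟩
  have hhi : e ⟨_ - 1, Nat.sub_one_lt_of_lt hn⟩ = hi :=
    (Finset.orderEmbOfFin_last rfl hn).trans <| (Finset.max'_eq_iff _ _ _).2
      ⟨Finset.right_mem_Icc.2 hlohi, fun _ hb => (Finset.mem_Icc.1 hb).2⟩
  have mem_iff (σ : Equiv.Perm (Fin (Finset.Icc lo hi).card)) :=
    precedes_mem_gapArrangements_iff e.strictMono hrange hn hlo hhi hk (σ := σ)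
  refine Set.BijOn.ncard_eq (f := fun σ : Equiv.Perm _ => Precedes (e ∘ σ)) ⟨fun σ => (mem_iff σ).2,
    (precedes_comp_perm_injective e.injective).injOn, fun r hr => ?_⟩
  obtain ⟨σ, rfl⟩ := IsArrangement.exists_perm (hrange ▸ hr.1) e.injective
  exact ⟨σ, (mem_iff σ).1 hr, rfl⟩

end Permutation

theorem ncard_SPerm_one_add {n j k : ℕ} (hn : 0 < n) (hj : 0 < j) (hk : 0 < k) :
    (SPerm n 1 (j + k)).ncard =
      ∑ m ∈ Finset.Icc 1 n, (SPerm m 1 j).ncard * (SPerm (n + 1 - m) 1 k).ncard := by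
  have ncard_SPerm {lo hi i : ℕ} (hle : lo ≤ hi) (hpos : 0 < i) :
      (SPerm (hi + 1 - lo) 1 i).ncard = (gapArrangements lo hi i).ncard := by
    rw [← Nat.card_Icc, ncard_SPerm_card_Icc hle hpos]
  calc (SPerm n 1 (j + k)).ncard
    _ = (gapArrangements 1 n (j + k)).ncard := ncard_SPerm hn (Nat.add_pos_left hj k)
    _ = ∑ m ∈ Finset.Icc 1 n, (gapArrangements 1 m j).ncard * (gapArrangements m n k).ncard :=
      ncard_gapArrangements_add hj hk
    _ = _ := Finset.sum_congr rfl fun m hm => by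
      have hm := Finset.mem_Icc.1 hm
      rw [← ncard_SPerm hm.1 hj, ← ncard_SPerm hm.2 hk, Nat.add_sub_cancel]

/-- with `a_{n,k} = |S_{n,k}^{1≺n}(1324)|`, for `n ≥ 2` and `k ≥ 2`,
`(k - 1) a_{n-1,k} = Σ_{j=1}^{k-1} Σ_{m=1}^{n-1} a_{m,j} a_{n-m,k-j}`
(the coefficient form of `x g₁ - t x ∂g₁/∂t = -g₁²`). -/
theorem stmt_10 (n k : ℕ) (hn : 2 ≤ n) (hk : 2 ≤ k) :
    (k - 1) * (SPerm (n - 1) 1 k).ncard =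
      ∑ j ∈ Finset.Icc 1 (k - 1), ∑ m ∈ Finset.Icc 1 (n - 1),
        (SPerm m 1 j).ncard * (SPerm (n - m) 1 (k - j)).ncard := by
  have inner_sum (j : ℕ) (hj : j ∈ Finset.Icc 1 (k - 1)) :
      ∑ m ∈ Finset.Icc 1 (n - 1), (SPerm m 1 j).ncard * (SPerm (n - m) 1 (k - j)).ncard =
        (SPerm (n - 1) 1 k).ncard := by
    rw [Finset.mem_Icc] at hj
    have h := ncard_SPerm_one_add (n := n - 1) (j := j) (k := k - j)
      (by omega) (by omega) (by omega)
    rw [Nat.sub_add_cancel (by omega), Nat.add_sub_cancel' (by omega)] at h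
    exact h.symm
  rw [Finset.sum_congr rfl inner_sum, Finset.sum_const, Nat.card_Icc, smul_eq_mul,
    Nat.add_sub_cancel]
end
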